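/- For every g ∈ O₇(k), the conjugate g⁻¹·A·g does NOT vanish at all positions of P; that is, there exists a position (i,j) ∈ P with (g⁻¹·A·g)ᵢⱼ ≠ 0. -/

import Mathlib

open Matrix

/-- The 7×7 anti-diagonal identity matrix over `𝔽₃` (0-indexed: entry 1 iff `i + j = 6`). -/
def Jmat : Matrix (Fin 7) (Fin 7) (ZMod 3) :=
  fun i j => if (i : ℕ) + (j : ℕ) = 6 then 1 else 0

/-- The matrix `A` from the paper. -/
def A : Matrix (Fin 7) (Fin 7) (ZMod 3) :=
  !![0,0,1,0,0,1,0;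
     1,0,0,0,0,0,1;
     0,1,0,0,0,0,0;
     0,0,0,0,0,0,0;
     0,1,0,0,0,0,1;
     0,0,1,0,1,0,0;
     0,0,0,0,0,1,0]

/-- The set of matrix positions of Lemma 2.2 (0-indexed; in the paper's 1-indexed
convention these are (3,1),(4,1),(5,1),(5,2),(6,1),(6,2),(6,3),(7,1),(7,2),(7,3),(7,4),(7,5)). -/
def P : Set (Fin 7 × Fin 7) :=
  {(2,0),(3,0),(4,0),(4,1),(5,0),(5,1),(5,2),(6,0),(6,1),(6,2),(6,3),(6,4)}

/-!
Let `F k` be the span of the first `k` standard basis vectors of `𝔽₃⁷`; its orthogonal is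
`F (7 - k)`. If `B = g⁻¹Ag` vanishes on `P`, then `B` maps `F 1` into `F 2` and `F 2` into `F 4`, so
for `e ∈ F 1` the numbers `⟨e, e⟩`, `⟨e, Be⟩`, `⟨Be, Be⟩`, `⟨Be, B²e⟩` are all zero, and
`⟨B²e, B²e⟩` is the square of the fourth coordinate of `B²e`. As `g` is an isometry, the vector
`v = ge` satisfies the same equations with respect to `A`. But for this particular `A`, a nonzero
`v` with `⟨v, v⟩ = ⟨v, Av⟩ = ⟨Av, Av⟩ = ⟨Av, A²v⟩ = 0` always has `⟨A²v, A²v⟩ = -1`, as one sees by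
running through the `3⁷` vectors, and `-1` is not a square modulo `3`.
-/

section StandardFlag

variable {R : Type*} [Semiring R] {n : ℕ}

/-- The standard complete flag of `Rⁿ`: its `k`-th step is spanned by the first `k` standard basis
vectors. -/
noncomputable def stdFlag (k : Fin (n + 1)) : Submodule R (Fin n → R) :=
  (Pi.basisFun R (Fin n)).flag k

theorem mem_stdFlag_iff {k : Fin (n + 1)} {x : Fin n → R} :
    x ∈ stdFlag k ↔ ∀ i : Fin n, k ≤ i.castSucc → x i = 0 := by
  simp only [stdFlag, Module.Basis.flag, Module.Basis.mem_span_image, Set.subset_def,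
    Finset.mem_coe, Finsupp.mem_support_iff, Pi.basisFun_repr, Set.mem_ofPred_eq, ← not_lt]
  exact forall_congr' fun i ↦ not_imp_comm

theorem single_one_mem_stdFlag {k : Fin (n + 1)} {i : Fin n} (hi : i.castSucc < k) :
    (Pi.single i 1 : Fin n → R) ∈ stdFlag k := by
  simpa only [stdFlag, Pi.basisFun_apply] using (Pi.basisFun R (Fin n)).self_mem_flag hi

theorem mulVec_mem_stdFlag {k l : Fin (n + 1)} {B : Matrix (Fin n) (Fin n) R}
    (hB : ∀ i j : Fin n, l ≤ i.castSucc → j.castSucc < k → B i j = 0) {x : Fin n → R}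
    (hx : x ∈ stdFlag k) : B *ᵥ x ∈ stdFlag l := by
  rw [mem_stdFlag_iff] at hx ⊢
  intro i hi
  rw [mulVec, dotProduct]
  refine Finset.sum_eq_zero fun j _ ↦ ?_
  rcases lt_or_ge j.castSucc k with hj | hj
  · rw [hB i j hi hj, zero_mul]
  · rw [hx j hj, mul_zero]

end StandardFlag

section Isometry

variable {n R : Type*} [Fintype n] [DecidableEq n] [CommRing R] {J g : Matrix n n R}

theorem toBilin'_mulVec_mulVec (hg : gᵀ * J * g = J) (x y : n → R) :
    Matrix.toBilin' J (g *ᵥ x) (g *ᵥ y) = Matrix.toBilin' J x y := by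
  conv_rhs => rw [← hg, ← Matrix.toBilin'_comp]
  simp only [LinearMap.BilinForm.comp_apply, Matrix.toLin'_apply]

theorem isUnit_det_of_transpose_mul_mul_eq (hJ : IsUnit J.det) (hg : gᵀ * J * g = J) :
    IsUnit g.det := by
  rw [← hg, det_mul] at hJ
  exact isUnit_of_mul_isUnit_right hJ

end Isometry

theorem isUnit_det_Jmat : IsUnit Jmat.det :=
  isUnit_det_of_left_inverse (B := Jmat) (by decide +kernel)

/-- The symmetric bilinear form `⟨x, y⟩ = x₁y₇ + x₂y₆ + ⋯ + x₇y₁` on `𝔽₃⁷`, with Gram matrix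
`Jmat`. -/
noncomputable def jForm : LinearMap.BilinForm (ZMod 3) (Fin 7 → ZMod 3) :=
  Matrix.toBilin' Jmat

theorem jForm_apply (x y : Fin 7 → ZMod 3) :
    jForm x y = x 0 * y 6 + x 1 * y 5 + x 2 * y 4 + x 3 * y 3 + x 4 * y 2 + x 5 * y 1
      + x 6 * y 0 := by
  simp [jForm, Matrix.toBilin'_apply', Jmat, dotProduct, mulVec, Fin.sum_univ_seven]

theorem jForm_eq_zero_of_mem_stdFlag {k l : Fin 8} (hkl : (k : ℕ) + l ≤ 7)
    {x y : Fin 7 → ZMod 3} (hx : x ∈ stdFlag k) (hy : y ∈ stdFlag l) : jForm x y = 0 := by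
  rw [mem_stdFlag_iff] at hx hy
  rw [jForm, Matrix.toBilin'_apply]
  refine Finset.sum_eq_zero fun i _ ↦ Finset.sum_eq_zero fun j _ ↦ ?_
  rcases le_or_gt k i.castSucc with hi | hi
  · rw [hx i hi, zero_mul, zero_mul]
  rcases le_or_gt l j.castSucc with hj | hj
  · rw [hy j hj, mul_zero]
  have hij : (i : ℕ) + j ≠ 6 := by
    simp only [Fin.lt_def, Fin.val_castSucc] at hi hj
    lia
  rw [Jmat, if_neg hij, mul_zero, zero_mul]

theorem jForm_self_of_mem_stdFlag_four {x : Fin 7 → ZMod 3} (hx : x ∈ stdFlag 4) :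
    jForm x x = x 3 * x 3 := by
  rw [mem_stdFlag_iff] at hx
  have h₄ : x 4 = 0 := hx 4 (by decide)
  have h₅ : x 5 = 0 := hx 5 (by decide)
  have h₆ : x 6 = 0 := hx 6 (by decide)
  simp [jForm_apply, h₄, h₅, h₆]

theorem A_mulVec (x : Fin 7 → ZMod 3) :
    A *ᵥ x = ![x 2 + x 5, x 0 + x 6, x 1, 0, x 1 + x 6, x 2 + x 4, x 5] := by
  ext i
  fin_cases i <;> simp [A, mulVec, dotProduct, Fin.sum_univ_seven]

theorem jForm_A_sq_mulVec_self_eq_neg_one {v : Fin 7 → ZMod 3} (hv : v ≠ 0)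
    (h₀ : jForm v v = 0) (h₁ : jForm v (A *ᵥ v) = 0)
    (h₂ : jForm (A *ᵥ v) (A *ᵥ v) = 0) (h₃ : jForm (A *ᵥ v) (A *ᵥ A *ᵥ v) = 0) :
    jForm (A *ᵥ A *ᵥ v) (A *ᵥ A *ᵥ v) = -1 := by
  simp only [A_mulVec, jForm_apply, Matrix.cons_val] at h₀ h₁ h₂ h₃ ⊢
  contrapose! hv
  have hv_eta : v = ![v 0, v 1, v 2, v 3, v 4, v 5, v 6] := by
    ext i
    fin_cases i <;> rfl
  refine hv_eta.trans ?_
  generalize v 0 = a, v 1 = b, v 2 = c, v 3 = d, v 4 = e, v 5 = f, v 6 = g at *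
  clear hv_eta v
  decide +kernel +revert

theorem jForm_conj_sq_mulVec_self_eq_neg_one {g B : Matrix (Fin 7) (Fin 7) (ZMod 3)}
    (hg : gᵀ * Jmat * g = Jmat) (hAB : A * g = g * B) {x : Fin 7 → ZMod 3} (hx : x ≠ 0)
    (h₀ : jForm x x = 0) (h₁ : jForm x (B *ᵥ x) = 0)
    (h₂ : jForm (B *ᵥ x) (B *ᵥ x) = 0) (h₃ : jForm (B *ᵥ x) (B *ᵥ B *ᵥ x) = 0) :
    jForm (B *ᵥ B *ᵥ x) (B *ᵥ B *ᵥ x) = -1 := by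
  have hdet : IsUnit g.det := isUnit_det_of_transpose_mul_mul_eq isUnit_det_Jmat hg
  have hgx : g *ᵥ x ≠ 0 := fun h ↦ hx (eq_zero_of_mulVec_eq_zero hdet.ne_zero h)
  have hform (y z : Fin 7 → ZMod 3) : jForm (g *ᵥ y) (g *ᵥ z) = jForm y z :=
    toBilin'_mulVec_mulVec hg y z
  have hA (y : Fin 7 → ZMod 3) : A *ᵥ g *ᵥ y = g *ᵥ B *ᵥ y := by
    rw [mulVec_mulVec, mulVec_mulVec, hAB]
  have key := jForm_A_sq_mulVec_self_eq_neg_one hgx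
  simp only [hA, hform] at key
  exact key h₀ h₁ h₂ h₃

section VanishingOnP

variable {B : Matrix (Fin 7) (Fin 7) (ZMod 3)} {x : Fin 7 → ZMod 3}

theorem mulVec_mem_stdFlag_two_of_mem_one (hB : ∀ p ∈ P, B p.1 p.2 = 0) (hx : x ∈ stdFlag 1) :
    B *ᵥ x ∈ stdFlag 2 := by
  refine mulVec_mem_stdFlag (fun i j hi hj ↦ hB (i, j) ?_) hx
  simp only [P, Set.mem_insert_iff, Set.mem_singleton_iff]
  decide +revert

theorem mulVec_mem_stdFlag_four_of_mem_two (hB : ∀ p ∈ P, B p.1 p.2 = 0) (hx : x ∈ stdFlag 2) :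
    B *ᵥ x ∈ stdFlag 4 := by
  refine mulVec_mem_stdFlag (fun i j hi hj ↦ hB (i, j) ?_) hx
  simp only [P, Set.mem_insert_iff, Set.mem_singleton_iff]
  decide +revert

end VanishingOnP

/-- Lemma 2.2: for every `g ∈ O₇(𝔽₃)`, the conjugate `g⁻¹·A·g` does not vanish at all
positions of `P`. -/
theorem stmt3 (g : Matrix (Fin 7) (Fin 7) (ZMod 3)) (hg : gᵀ * Jmat * g = Jmat) :
    ∃ p ∈ P, (g⁻¹ * A * g) p.1 p.2 ≠ 0 := by
  by_contra! hB
  have hdet : IsUnit g.det := isUnit_det_of_transpose_mul_mul_eq isUnit_det_Jmat hg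
  have hAB : A * g = g * (g⁻¹ * A * g) := by
    rw [Matrix.mul_assoc, mul_nonsing_inv_cancel_left _ _ hdet]
  generalize g⁻¹ * A * g = B at hB hAB
  obtain ⟨e, he, he_ne⟩ : ∃ e : Fin 7 → ZMod 3, e ∈ stdFlag 1 ∧ e ≠ 0 :=
    ⟨Pi.single 0 1, single_one_mem_stdFlag (by decide), Pi.single_ne_zero_iff.2 one_ne_zero⟩
  have hBe : B *ᵥ e ∈ stdFlag 2 := mulVec_mem_stdFlag_two_of_mem_one hB he
  have hBBe : B *ᵥ B *ᵥ e ∈ stdFlag 4 := mulVec_mem_stdFlag_four_of_mem_two hB hBe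
  have hneg : jForm (B *ᵥ B *ᵥ e) (B *ᵥ B *ᵥ e) = -1 :=
    jForm_conj_sq_mulVec_self_eq_neg_one hg hAB he_ne
      (jForm_eq_zero_of_mem_stdFlag (by decide) he he)
      (jForm_eq_zero_of_mem_stdFlag (by decide) he hBe)
      (jForm_eq_zero_of_mem_stdFlag (by decide) hBe hBe)
      (jForm_eq_zero_of_mem_stdFlag (by decide) hBe hBBe)
  have hsq : IsSquare (-1 : ZMod 3) :=
    ⟨_, hneg.symm.trans (jForm_self_of_mem_stdFlag_four hBBe)⟩
  exact ZMod.exists_sq_eq_neg_one_iff.1 hsq rfl
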